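/- Let n ≥ 1, m > n, and let L be a nonempty skew-tabular lattice with boundary functions β0, β1. Then for every array g ∈ L and every color i ∈ {1,…,n}, m_i(g) = Σ_{u=0}^{m−1} ( 2·g_{i,i−u} − g_{i+1,i+1−u} − g_{i−1,i−1−u} ). -/

import Mathlib

noncomputable section

/-! ### Skew-tabular lattices -/

namespace ST

/-- Index positions of a GT parallelogram: rows `0,…,n+1`, row `i` having
columns `C_i = {i, i−1, …, i−(m−1)}`. -/
def Idx (n m : ℕ) : Type :=
  {p : ℕ × ℤ // p.1 ≤ n + 1 ∧ (p.1 : ℤ) - ((m : ℤ) - 1) ≤ p.2 ∧ p.2 ≤ (p.1 : ℤ)}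

/-- The skew-tabular lattice with boundary rows `β0` (row `0`) and `β1` (row `n+1`):
arrays of nonnegative integers weakly increasing along NW-to-SE and NE-to-SW diagonals. -/
def Elt (n m : ℕ) (β0 β1 : ℤ → ℕ) : Type :=
  {g : Idx n m → ℕ //
    (∀ p : Idx n m, p.1.1 = 0 → g p = β0 p.1.2) ∧
    (∀ p : Idx n m, p.1.1 = n + 1 → g p = β1 p.1.2) ∧
    (∀ p q : Idx n m, q.1.1 = p.1.1 + 1 → q.1.2 = p.1.2 → g q ≤ g p) ∧
    (∀ p q : Idx n m, q.1.1 = p.1.1 + 1 → q.1.2 = p.1.2 + 1 → g p ≤ g q)}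

variable {n m : ℕ} {β0 β1 : ℤ → ℕ}

/-- Componentwise comparison of arrays. -/
def le (r s : Elt n m β0 β1) : Prop := ∀ p, r.1 p ≤ s.1 p

/-- The covering edge of color `i`: exactly one entry, in row `i`, is increased by one. -/
def edge (i : ℕ) (r s : Elt n m β0 β1) : Prop :=
  ∃ p : Idx n m, p.1.1 = i ∧ s.1 p = r.1 p + 1 ∧ ∀ q, q ≠ p → s.1 q = r.1 q

/-- The entry of an array at `(i, j)` (junk value `0` outside the index set). -/
def ent (g : Elt n m β0 β1) (i : ℕ) (j : ℤ) : ℕ :=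
  if h : i ≤ n + 1 ∧ (i : ℤ) - ((m : ℤ) - 1) ≤ j ∧ j ≤ (i : ℤ) then g.1 ⟨(i, j), h⟩ else 0

/-- The rank function: the sum of all entries in rows `1,…,n`. -/
def rk (g : Elt n m β0 β1) : ℕ :=
  ∑ i ∈ Finset.range (n + 2), ∑ u ∈ Finset.range m,
    if 1 ≤ i ∧ i ≤ n then ent g i ((i : ℤ) - (u : ℤ)) else 0

/-- The connected component of `g` in the graph of color-`i` covering edges. -/
def comp (i : ℕ) (g : Elt n m β0 β1) : Set (Elt n m β0 β1) :=
  {s | Relation.ReflTransGen (fun x y => edge i x y ∨ edge i y x) g s}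

/-- The integer `m_i(g) = (ρ(g) − min ρ on comp_i(g)) − (max ρ on comp_i(g) − ρ(g))`. -/
def mwt (i : ℕ) (g : Elt n m β0 β1) : ℤ :=
  ((rk g : ℤ) - ((sInf (rk '' comp i g) : ℕ) : ℤ)) -
    (((sSup (rk '' comp i g) : ℕ) : ℤ) - (rk g : ℤ))

end ST

/-!
Within a color-`i` component only row `i` varies, and there each entry ranges independently over the
interval cut out by its neighbors in rows `i - 1` and `i + 1`. Two arrays differing only in row `i`
are connected through color-`i` edges, so the minimum and the maximum of the rank on the component
are attained by putting every entry of row `i` at its lower, resp. upper, bound. The lower bound of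
one entry and the upper bound of the next one along the row are the maximum and the minimum of the
same two neighbors, so the bounds add up to the sum of the two neighboring rows.
-/

namespace ST

variable {n m i : ℕ} {β0 β1 : ℤ → ℕ} {g r s : Elt n m β0 β1}

/-- The set `C_i = {i, i - 1, …, i - (m - 1)}` of columns of row `i`. -/
abbrev columns (m i : ℕ) : Set ℤ := Set.Icc ((i : ℤ) - ((m : ℤ) - 1)) i

lemma sub_mem_columns {u : ℕ} (hu : u ∈ Finset.range m) : (i : ℤ) - u ∈ columns m i := by
  rw [Finset.mem_range] at hu
  constructor <;> omega

lemma ent_of_mem_columns (g : Elt n m β0 β1) {k : ℕ} {j : ℤ} (hk : k ≤ n + 1)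
    (hj : j ∈ columns m k) : ent g k j = g.1 ⟨(k, j), hk, hj⟩ :=
  dif_pos ⟨hk, hj⟩

lemma ent_row_col (g : Elt n m β0 β1) (p : Idx n m) : ent g p.1.1 p.1.2 = g.1 p :=
  dif_pos p.2

lemma ent_succ_row_le (g : Elt n m β0 β1) {k : ℕ} {j : ℤ} (hk : k ≤ n) (hj : j ∈ columns m k)
    (hj' : j ∈ columns m (k + 1)) : ent g (k + 1) j ≤ ent g k j := by
  rw [ent_of_mem_columns g (by omega) hj, ent_of_mem_columns g (by omega) hj']
  exact g.2.2.2.1 _ _ rfl rfl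

lemma ent_le_ent_succ_succ (g : Elt n m β0 β1) {k : ℕ} {j : ℤ} (hk : k ≤ n)
    (hj : j ∈ columns m k) : ent g k j ≤ ent g (k + 1) (j + 1) := by
  have hj' : j + 1 ∈ columns m (k + 1) := by
    obtain ⟨hlo, hhi⟩ := hj
    constructor <;> push_cast <;> omega
  rw [ent_of_mem_columns g (by omega) hj, ent_of_mem_columns g (by omega) hj']
  exact g.2.2.2.2 _ _ rfl rfl

lemma ent_mono (h : le r s) (k : ℕ) (j : ℤ) : ent r k j ≤ ent s k j := by
  unfold ent
  split_ifs
  · exact h _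
  · exact le_rfl

/-- The sum of the entries of row `i`. -/
def rowSum (i : ℕ) (g : Elt n m β0 β1) : ℕ :=
  ∑ u ∈ Finset.range m, ent g i ((i : ℤ) - (u : ℤ))

lemma rowSum_lt_rowSum (h : le r s) {p : Idx n m} (hlt : r.1 p < s.1 p) :
    rowSum p.1.1 r < rowSum p.1.1 s := by
  obtain ⟨hlo, hhi⟩ := p.2.2
  refine Finset.sum_lt_sum (fun _ _ => ent_mono h _ _) ⟨((p.1.1 : ℤ) - p.1.2).toNat, ?_, ?_⟩
  · rw [Finset.mem_range]
    omega
  · rwa [show (p.1.1 : ℤ) - ((p.1.1 : ℤ) - p.1.2).toNat = p.1.2 by omega, ent_row_col, ent_row_col]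

lemma edge.rowSum_lt (h : edge i r s) : rowSum i r < rowSum i s := by
  obtain ⟨p, rfl, hp, hne⟩ := h
  refine rowSum_lt_rowSum (fun q => ?_) (p := p) (by omega)
  by_cases hq : q = p
  · subst hq
    omega
  · exact (hne q hq).ge

lemma rk_eq_sum_rowSum (g : Elt n m β0 β1) : rk g = ∑ k ∈ Finset.Icc 1 n, rowSum k g := by
  have hrows : {k ∈ Finset.range (n + 2) | 1 ≤ k ∧ k ≤ n} = Finset.Icc 1 n := by
    ext k
    simp only [Finset.mem_filter, Finset.mem_range, Finset.mem_Icc]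
    omega
  rw [← hrows, Finset.sum_filter]
  refine Finset.sum_congr rfl fun k _ => ?_
  split_ifs
  · rfl
  · exact Finset.sum_const_zero

/-- The arrays `r` and `s` coincide except possibly in row `i`. -/
def AgreeOff (i : ℕ) (r s : Elt n m β0 β1) : Prop :=
  ∀ p : Idx n m, p.1.1 ≠ i → r.1 p = s.1 p

lemma AgreeOff.symm (h : AgreeOff i r s) : AgreeOff i s r :=
  fun p hp => (h p hp).symm

lemma AgreeOff.trans {t : Elt n m β0 β1} (h : AgreeOff i r s) (h' : AgreeOff i s t) :
    AgreeOff i r t :=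
  fun p hp => (h p hp).trans (h' p hp)

lemma AgreeOff.ent_eq (h : AgreeOff i r s) {k : ℕ} (hk : k ≠ i) (j : ℤ) :
    ent r k j = ent s k j := by
  unfold ent
  split_ifs
  · exact h _ hk
  · rfl

lemma AgreeOff.le_of_ent_le (h : AgreeOff i r s)
    (hrow : ∀ j ∈ columns m i, ent r i j ≤ ent s i j) : le r s := by
  intro p
  by_cases hp : p.1.1 = i
  · subst hp
    rw [← ent_row_col r, ← ent_row_col s]
    exact hrow _ p.2.2
  · exact (h p hp).le

lemma AgreeOff.rk_add_rowSum (h : AgreeOff i r s) (hi1 : 1 ≤ i) (hin : i ≤ n) :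
    rk s + rowSum i r = rk r + rowSum i s := by
  have hother : ∑ k ∈ (Finset.Icc 1 n).erase i, rowSum k r =
      ∑ k ∈ (Finset.Icc 1 n).erase i, rowSum k s :=
    Finset.sum_congr rfl fun k hk =>
      Finset.sum_congr rfl fun _ _ => h.ent_eq (Finset.ne_of_mem_erase hk) _
  have hi : i ∈ Finset.Icc 1 n := Finset.mem_Icc.2 ⟨hi1, hin⟩
  rw [rk_eq_sum_rowSum, rk_eq_sum_rowSum, ← Finset.add_sum_erase _ _ hi,
    ← Finset.add_sum_erase _ _ hi, hother]
  ring

lemma edge.agreeOff (h : edge i r s) : AgreeOff i r s := by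
  obtain ⟨p, rfl, -, hne⟩ := h
  exact fun q hq => (hne q (ne_of_apply_ne (fun p : Idx n m => p.1.1) hq)).symm

lemma agreeOff_of_mem_comp (h : s ∈ comp i g) : AgreeOff i g s := by
  induction (h : Relation.ReflTransGen _ g s) with
  | refl => exact fun _ _ => rfl
  | tail _ hstep ih =>
    rcases hstep with hup | hdown
    · exact ih.trans hup.agreeOff
    · exact ih.trans hdown.agreeOff.symm

/-- The largest value allowed at `(i, j)` by the neighboring entries `(i + 1, j + 1)` and
`(i - 1, j)`, the latter of which is missing in the last column `j = i`. -/
def rowUpper (i : ℕ) (g : Elt n m β0 β1) (j : ℤ) : ℕ :=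
  if j = i then ent g (i + 1) (j + 1) else min (ent g (i + 1) (j + 1)) (ent g (i - 1) j)

/-- The smallest value allowed at `(i, j)` by the neighboring entries `(i - 1, j - 1)` and
`(i + 1, j)`, the latter of which is missing in the first column `j = i - (m - 1)`. -/
def rowLower (i : ℕ) (g : Elt n m β0 β1) (j : ℤ) : ℕ :=
  if j = i - ((m : ℤ) - 1) then ent g (i - 1) (j - 1)
  else max (ent g (i - 1) (j - 1)) (ent g (i + 1) j)

lemma rowUpper_le_ent_succ_succ (i : ℕ) (g : Elt n m β0 β1) (j : ℤ) :
    rowUpper i g j ≤ ent g (i + 1) (j + 1) := by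
  unfold rowUpper
  split_ifs
  · exact le_rfl
  · exact min_le_left _ _

lemma rowUpper_le_ent_pred_row (g : Elt n m β0 β1) {j : ℤ} (hj : j ≠ i) :
    rowUpper i g j ≤ ent g (i - 1) j :=
  (if_neg hj).trans_le (min_le_right _ _)

lemma ent_pred_pred_le_rowLower (i : ℕ) (g : Elt n m β0 β1) (j : ℤ) :
    ent g (i - 1) (j - 1) ≤ rowLower i g j := by
  unfold rowLower
  split_ifs
  · exact le_rfl
  · exact le_max_left _ _

lemma ent_succ_row_le_rowLower (g : Elt n m β0 β1) {j : ℤ} (hj : j ≠ i - ((m : ℤ) - 1)) :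
    ent g (i + 1) j ≤ rowLower i g j :=
  (le_max_right _ _).trans_eq (if_neg hj).symm

lemma ent_le_rowUpper (hi1 : 1 ≤ i) (hin : i ≤ n) (g : Elt n m β0 β1) {j : ℤ}
    (hj : j ∈ columns m i) : ent g i j ≤ rowUpper i g j := by
  have hright : ent g i j ≤ ent g (i + 1) (j + 1) := ent_le_ent_succ_succ g hin hj
  obtain ⟨k, rfl⟩ := Nat.exists_eq_add_of_le' hi1
  unfold rowUpper
  split_ifs with hlast
  · exact hright
  · refine le_min hright (ent_succ_row_le g (by omega) ?_ hj)
    obtain ⟨hlo, hhi⟩ := hj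
    constructor <;> omega

lemma rowLower_le_ent (hi1 : 1 ≤ i) (hin : i ≤ n) (g : Elt n m β0 β1) {j : ℤ}
    (hj : j ∈ columns m i) : rowLower i g j ≤ ent g i j := by
  have ⟨hlo, hhi⟩ := hj
  have hleft : ent g (i - 1) (j - 1) ≤ ent g i j := by
    have := ent_le_ent_succ_succ g (k := i - 1) (j := j - 1) (by omega)
      (by constructor <;> omega)
    rwa [Nat.sub_add_cancel hi1, sub_add_cancel] at this
  unfold rowLower
  split_ifs with hfirst
  · exact hleft
  · exact max_le hleft (ent_succ_row_le g hin hj (by constructor <;> push_cast <;> omega))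

lemma rowLower_le_rowUpper (hi1 : 1 ≤ i) (hin : i ≤ n) (g : Elt n m β0 β1) {j : ℤ}
    (hj : j ∈ columns m i) : rowLower i g j ≤ rowUpper i g j :=
  (rowLower_le_ent hi1 hin g hj).trans (ent_le_rowUpper hi1 hin g hj)

lemma AgreeOff.rowUpper_eq (h : AgreeOff i r s) (hi1 : 1 ≤ i) (j : ℤ) :
    rowUpper i r j = rowUpper i s j := by
  unfold rowUpper
  rw [h.ent_eq (by omega), h.ent_eq (by omega)]

lemma AgreeOff.rowLower_eq (h : AgreeOff i r s) (hi1 : 1 ≤ i) (j : ℤ) :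
    rowLower i r j = rowLower i s j := by
  unfold rowLower
  rw [h.ent_eq (by omega), h.ent_eq (by omega)]

/-- The array `g` with row `i` replaced by `F`, as a bare function on positions: it need not satisfy
the inequalities of a skew-tabular lattice. -/
def setRow (i : ℕ) (g : Elt n m β0 β1) (F : ℤ → ℕ) (p : Idx n m) : ℕ :=
  if p.1.1 = i then F p.1.2 else g.1 p

lemma setRow_of_row_eq {F : ℤ → ℕ} {p : Idx n m} (hp : p.1.1 = i) :
    setRow i g F p = F p.1.2 :=
  if_pos hp

lemma setRow_of_row_ne {F : ℤ → ℕ} {p : Idx n m} (hp : p.1.1 ≠ i) : setRow i g F p = g.1 p :=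
  if_neg hp

section SetRow

variable {F : ℤ → ℕ} {p q : Idx n m}

lemma setRow_succ_row_le (hlower : ∀ j ∈ columns m i, rowLower i g j ≤ F j)
    (hupper : ∀ j ∈ columns m i, F j ≤ rowUpper i g j)
    (hrow : q.1.1 = p.1.1 + 1) (hcol : q.1.2 = p.1.2) :
    setRow i g F q ≤ setRow i g F p := by
  have hp_le : p.1.2 ≤ p.1.1 := p.2.2.2
  have hq_ge : (q.1.1 : ℤ) - ((m : ℤ) - 1) ≤ q.1.2 := q.2.2.1
  by_cases hp : p.1.1 = i
  · subst hp
    calc setRow p.1.1 g F q = ent g (p.1.1 + 1) p.1.2 := by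
          rw [setRow_of_row_ne (by omega), ← ent_row_col, hrow, hcol]
      _ ≤ rowLower p.1.1 g p.1.2 := ent_succ_row_le_rowLower g (by omega)
      _ ≤ F p.1.2 := hlower _ p.2.2
      _ = setRow p.1.1 g F p := (setRow_of_row_eq rfl).symm
  · by_cases hq : q.1.1 = i
    · subst hq
      calc setRow q.1.1 g F q = F q.1.2 := setRow_of_row_eq rfl
        _ ≤ rowUpper q.1.1 g q.1.2 := hupper _ q.2.2
        _ ≤ ent g (q.1.1 - 1) q.1.2 := rowUpper_le_ent_pred_row g (by omega)
        _ = setRow q.1.1 g F p := by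
          rw [setRow_of_row_ne hp, ← ent_row_col, hrow, hcol, Nat.add_sub_cancel]
    · rw [setRow_of_row_ne hp, setRow_of_row_ne hq]
      exact g.2.2.2.1 p q hrow hcol

lemma setRow_le_setRow_succ_succ (hlower : ∀ j ∈ columns m i, rowLower i g j ≤ F j)
    (hupper : ∀ j ∈ columns m i, F j ≤ rowUpper i g j)
    (hrow : q.1.1 = p.1.1 + 1) (hcol : q.1.2 = p.1.2 + 1) :
    setRow i g F p ≤ setRow i g F q := by
  by_cases hp : p.1.1 = i
  · subst hp
    calc setRow p.1.1 g F p = F p.1.2 := setRow_of_row_eq rfl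
      _ ≤ rowUpper p.1.1 g p.1.2 := hupper _ p.2.2
      _ ≤ ent g (p.1.1 + 1) (p.1.2 + 1) := rowUpper_le_ent_succ_succ _ g _
      _ = setRow p.1.1 g F q := by
        rw [setRow_of_row_ne (by omega), ← ent_row_col, hrow, hcol]
  · by_cases hq : q.1.1 = i
    · subst hq
      calc setRow q.1.1 g F p = ent g (q.1.1 - 1) (q.1.2 - 1) := by
            rw [setRow_of_row_ne hp, ← ent_row_col, hrow, hcol, Nat.add_sub_cancel,
              add_sub_cancel_right]
        _ ≤ rowLower q.1.1 g q.1.2 := ent_pred_pred_le_rowLower _ g _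
        _ ≤ F q.1.2 := hlower _ q.2.2
        _ = setRow q.1.1 g F q := (setRow_of_row_eq rfl).symm
    · rw [setRow_of_row_ne hp, setRow_of_row_ne hq]
      exact g.2.2.2.2 p q hrow hcol

end SetRow

lemma exists_agreeOff_ent_eq (hi1 : 1 ≤ i) (hin : i ≤ n) (g : Elt n m β0 β1) {F : ℤ → ℕ}
    (hlower : ∀ j ∈ columns m i, rowLower i g j ≤ F j)
    (hupper : ∀ j ∈ columns m i, F j ≤ rowUpper i g j) :
    ∃ s : Elt n m β0 β1, AgreeOff i g s ∧ ∀ j ∈ columns m i, ent s i j = F j := by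
  refine ⟨⟨setRow i g F, fun p hp => ?_, fun p hp => ?_,
    fun p q => setRow_succ_row_le hlower hupper,
    fun p q => setRow_le_setRow_succ_succ hlower hupper⟩,
    fun p hp => (setRow_of_row_ne hp).symm, fun j hj => ?_⟩
  · rw [setRow_of_row_ne (by omega), g.2.1 p hp]
  · rw [setRow_of_row_ne (by omega), g.2.2.1 p hp]
  · exact (ent_of_mem_columns _ (Nat.le_succ_of_le hin) hj).trans (setRow_of_row_eq rfl)

lemma exists_edge_le (hi1 : 1 ≤ i) (hin : i ≤ n) (hagree : AgreeOff i r s) (hle : le r s)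
    (hne : r ≠ s) : ∃ t, edge i r t ∧ le t s := by
  obtain ⟨p, hp⟩ : ∃ p, r.1 p ≠ s.1 p := Function.ne_iff.1 (Subtype.coe_ne_coe.2 hne)
  obtain rfl : p.1.1 = i := of_not_not fun hpi => hp (hagree p hpi)
  let F : ℤ → ℕ := Function.update (ent r p.1.1) p.1.2 (r.1 p + 1)
  have hrF : ent r p.1.1 ≤ F := by
    rw [le_update_iff, ent_row_col]
    exact ⟨Nat.le_succ _, fun _ _ => le_rfl⟩
  have hFs : F ≤ ent s p.1.1 := by
    rw [update_le_iff, ent_row_col]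
    exact ⟨(hle p).lt_of_ne hp, fun _ _ => ent_mono hle _ _⟩
  obtain ⟨t, hrt, htF⟩ := exists_agreeOff_ent_eq hi1 hin r (F := F)
    (fun j hj => (rowLower_le_ent hi1 hin r hj).trans (hrF j))
    (fun j hj => (hFs j).trans <|
      (ent_le_rowUpper hi1 hin s hj).trans_eq (hagree.rowUpper_eq hi1 j).symm)
  refine ⟨t, ⟨p, rfl, ?_, fun q hq => ?_⟩,
    (hrt.symm.trans hagree).le_of_ent_le fun j hj => (htF j hj).trans_le (hFs j)⟩
  · rw [← ent_row_col t, htF _ p.2.2]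
    exact Function.update_self ..
  · by_cases hrow : q.1.1 = p.1.1
    · have hcol : q.1.2 ≠ p.1.2 := fun hcol => hq (Subtype.ext (Prod.ext hrow hcol))
      calc t.1 q = F q.1.2 := by rw [← ent_row_col t, hrow, htF _ (hrow ▸ q.2.2)]
        _ = ent r p.1.1 q.1.2 := Function.update_of_ne hcol _ _
        _ = r.1 q := by rw [← hrow, ent_row_col]
    · exact (hrt q hrow).symm

lemma reflTransGen_edge_of_le (hi1 : 1 ≤ i) (hin : i ≤ n) (hagree : AgreeOff i r s)
    (hle : le r s) : Relation.ReflTransGen (edge i) r s := by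
  induction hd : rowSum i s - rowSum i r using Nat.strong_induction_on generalizing r with
  | h d ih =>
    by_cases hne : r = s
    · rw [hne]
    · obtain ⟨t, hrt, hts⟩ := exists_edge_le hi1 hin hagree hle hne
      have hrowSum_le : rowSum i t ≤ rowSum i s := Finset.sum_le_sum fun _ _ => ent_mono hts _ _
      have hrowSum_lt : rowSum i r < rowSum i t := hrt.rowSum_lt
      exact .head hrt (ih _ (by omega) (hrt.agreeOff.symm.trans hagree) hts rfl)

lemma mem_comp_iff_agreeOff (hi1 : 1 ≤ i) (hin : i ≤ n) : s ∈ comp i g ↔ AgreeOff i g s := by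
  refine ⟨agreeOff_of_mem_comp, fun hgs => ?_⟩
  obtain ⟨a, hga, ha⟩ := exists_agreeOff_ent_eq hi1 hin g (F := rowLower i g)
    (fun _ _ => le_rfl)
    (fun _ hj => rowLower_le_rowUpper hi1 hin g hj)
  have hpath {t : Elt n m β0 β1} (hgt : AgreeOff i g t) : Relation.ReflTransGen (edge i) a t := by
    have hat : AgreeOff i a t := hga.symm.trans hgt
    refine reflTransGen_edge_of_le hi1 hin hat (hat.le_of_ent_le fun j hj => ?_)
    rw [ha j hj, hgt.rowLower_eq hi1]
    exact rowLower_le_ent hi1 hin t hj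
  have hdown : Relation.ReflTransGen (Function.swap (edge i)) g a :=
    Relation.reflTransGen_swap.2 (hpath fun _ _ => rfl)
  exact (Relation.ReflTransGen.mono (fun _ _ => Or.inr) _ _ hdown).trans
    (Relation.ReflTransGen.mono (fun _ _ => Or.inl) _ _ (hpath hgs))

lemma sInf_rk_comp_add_rowSum (hi1 : 1 ≤ i) (hin : i ≤ n) (g : Elt n m β0 β1) :
    sInf (rk '' comp i g) + rowSum i g =
      rk g + ∑ u ∈ Finset.range m, rowLower i g ((i : ℤ) - (u : ℤ)) := by
  obtain ⟨a, hga, ha⟩ := exists_agreeOff_ent_eq hi1 hin g (F := rowLower i g)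
    (fun _ _ => le_rfl)
    (fun _ hj => rowLower_le_rowUpper hi1 hin g hj)
  have hsum : rowSum i a = ∑ u ∈ Finset.range m, rowLower i g ((i : ℤ) - (u : ℤ)) :=
    Finset.sum_congr rfl fun _ hu => ha _ (sub_mem_columns hu)
  have hleast : IsLeast (rk '' comp i g) (rk a) := by
    refine ⟨⟨a, (mem_comp_iff_agreeOff hi1 hin).2 hga, rfl⟩, ?_⟩
    rintro _ ⟨s, hs, rfl⟩
    have has : AgreeOff i a s := hga.symm.trans (agreeOff_of_mem_comp hs)
    have hrowSum : rowSum i a ≤ rowSum i s := by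
      refine hsum.trans_le (Finset.sum_le_sum fun u hu => ?_)
      rw [(agreeOff_of_mem_comp hs).rowLower_eq hi1]
      exact rowLower_le_ent hi1 hin s (sub_mem_columns hu)
    have hrk := has.rk_add_rowSum hi1 hin
    omega
  rw [hleast.csInf_eq, ← hsum]
  exact hga.rk_add_rowSum hi1 hin

lemma sSup_rk_comp_add_rowSum (hi1 : 1 ≤ i) (hin : i ≤ n) (g : Elt n m β0 β1) :
    sSup (rk '' comp i g) + rowSum i g =
      rk g + ∑ u ∈ Finset.range m, rowUpper i g ((i : ℤ) - (u : ℤ)) := by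
  obtain ⟨b, hgb, hb⟩ := exists_agreeOff_ent_eq hi1 hin g (F := rowUpper i g)
    (fun _ hj => rowLower_le_rowUpper hi1 hin g hj)
    (fun _ _ => le_rfl)
  have hsum : rowSum i b = ∑ u ∈ Finset.range m, rowUpper i g ((i : ℤ) - (u : ℤ)) :=
    Finset.sum_congr rfl fun _ hu => hb _ (sub_mem_columns hu)
  have hgreatest : IsGreatest (rk '' comp i g) (rk b) := by
    refine ⟨⟨b, (mem_comp_iff_agreeOff hi1 hin).2 hgb, rfl⟩, ?_⟩
    rintro _ ⟨s, hs, rfl⟩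
    have hbs : AgreeOff i b s := hgb.symm.trans (agreeOff_of_mem_comp hs)
    have hrowSum : rowSum i s ≤ rowSum i b := by
      refine (Finset.sum_le_sum fun u hu => ?_).trans_eq hsum.symm
      rw [(agreeOff_of_mem_comp hs).rowUpper_eq hi1]
      exact ent_le_rowUpper hi1 hin s (sub_mem_columns hu)
    have hrk := hbs.rk_add_rowSum hi1 hin
    omega
  rw [hgreatest.csSup_eq, ← hsum]
  exact hgb.rk_add_rowSum hi1 hin

lemma rowLower_add_rowUpper_sub_one (g : Elt n m β0 β1) {j : ℤ}
    (hlo : (i : ℤ) - ((m : ℤ) - 1) < j) (hhi : j ≤ i) :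
    rowLower i g j + rowUpper i g (j - 1) = ent g (i + 1) j + ent g (i - 1) (j - 1) := by
  rw [rowLower, if_neg (by omega), rowUpper, if_neg (by omega), sub_add_cancel, add_comm,
    min_comm, min_add_max, add_comm]

lemma sum_rowLower_add_sum_rowUpper (hi1 : 1 ≤ i) (g : Elt n m β0 β1) :
    ∑ u ∈ Finset.range m, rowLower i g ((i : ℤ) - (u : ℤ)) +
      ∑ u ∈ Finset.range m, rowUpper i g ((i : ℤ) - (u : ℤ)) =
        rowSum (i + 1) g + rowSum (i - 1) g := by
  rcases m with _ | m
  · rfl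
  have hfirst : rowLower i g ((i : ℤ) - (m : ℤ)) = ent g (i - 1) (((i - 1 : ℕ) : ℤ) - (m : ℤ)) := by
    rw [rowLower, if_pos (by push_cast; ring), Nat.cast_sub hi1, Nat.cast_one, sub_right_comm]
  have hlast : rowUpper i g ((i : ℤ) - ((0 : ℕ) : ℤ)) =
      ent g (i + 1) (((i + 1 : ℕ) : ℤ) - ((0 : ℕ) : ℤ)) := by
    rw [rowUpper, if_pos (by simp), Nat.cast_succ, sub_add_eq_add_sub]
  have hpairs : ∑ u ∈ Finset.range m, rowLower i g ((i : ℤ) - (u : ℤ)) +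
      ∑ u ∈ Finset.range m, rowUpper i g ((i : ℤ) - ((u + 1 : ℕ) : ℤ)) =
      ∑ u ∈ Finset.range m, ent g (i + 1) (((i + 1 : ℕ) : ℤ) - ((u + 1 : ℕ) : ℤ)) +
      ∑ u ∈ Finset.range m, ent g (i - 1) (((i - 1 : ℕ) : ℤ) - (u : ℤ)) := by
    rw [← Finset.sum_add_distrib, ← Finset.sum_add_distrib]
    refine Finset.sum_congr rfl fun u hu => ?_
    rw [Finset.mem_range] at hu
    rw [Nat.cast_succ u, ← sub_sub,
      rowLower_add_rowUpper_sub_one g (by push_cast; omega) (by omega), Nat.cast_succ i,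
      add_sub_add_right_eq_sub, Nat.cast_sub hi1, Nat.cast_one, sub_right_comm]
  rw [rowSum, rowSum, Finset.sum_range_succ, Finset.sum_range_succ', Finset.sum_range_succ',
    Finset.sum_range_succ, hfirst, hlast]
  omega

end ST

theorem statement_10_general (n m : ℕ) (β0 β1 : ℤ → ℕ)
    (g : ST.Elt n m β0 β1) (i : ℕ) (hi1 : 1 ≤ i) (hin : i ≤ n) :
    ST.mwt i g = ∑ u ∈ Finset.range m,
      (2 * (ST.ent g i ((i : ℤ) - (u : ℤ)) : ℤ) -
        (ST.ent g (i + 1) ((i : ℤ) + 1 - (u : ℤ)) : ℤ) -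
        (ST.ent g (i - 1) ((i : ℤ) - 1 - (u : ℤ)) : ℤ)) := by
  have hmin := ST.sInf_rk_comp_add_rowSum hi1 hin g
  have hmax := ST.sSup_rk_comp_add_rowSum hi1 hin g
  have hbounds := ST.sum_rowLower_add_sum_rowUpper hi1 g
  have hmwt : ST.mwt i g =
      2 * (ST.rowSum i g : ℤ) - ST.rowSum (i + 1) g - ST.rowSum (i - 1) g := by
    unfold ST.mwt
    omega
  rw [hmwt]
  simp only [ST.rowSum, Nat.cast_sum, Finset.sum_sub_distrib, Finset.mul_sum, Nat.cast_add,
    Nat.cast_one, Nat.cast_sub hi1]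

/-- in a nonempty skew-tabular lattice, `m_i(g)` is given by the explicit
Gelfand–Tsetlin-type formula. -/
theorem statement_10 (n m : ℕ) (hn : 1 ≤ n) (hm : n < m) (β0 β1 : ℤ → ℕ)
    (g : ST.Elt n m β0 β1) (i : ℕ) (hi1 : 1 ≤ i) (hin : i ≤ n) :
    ST.mwt i g = ∑ u ∈ Finset.range m,
      (2 * (ST.ent g i ((i : ℤ) - (u : ℤ)) : ℤ) -
        (ST.ent g (i + 1) ((i : ℤ) + 1 - (u : ℤ)) : ℤ) -
        (ST.ent g (i - 1) ((i : ℤ) - 1 - (u : ℤ)) : ℤ)) := by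
  exact statement_10_general n m β0 β1 g i hi1 hin

end
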